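/- arXiv:2212.12009 — 2 statements merged into one kernel-verified Lean document; each statement's English description precedes it below -/
import Mathlib

section
/- Let Θ be a partially ordered set in which every pair of elements has an upper bound and a lower bound in Θ, let Z be a nonempty set, and let f : Z × Θ → ℝ. Then f is linear combinations SC-preserving if and only if there exist z₁, z₂ ∈ Z and functions λ₁, λ₂ : Z → ℝ such that (1) f(z₁, ·) : Θ → ℝ and f(z₂, ·) : Θ → ℝ are each single crossing and ratio ordered, and (2) for every z ∈ Z and θ ∈ Θ, f(z, θ) = λ₁(z)·f(z₁, θ) + λ₂(z)·f(z₂, θ). -/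
/-- A function `f : Θ → ℝ` is single crossing if `θ ↦ sgn (f θ)` is monotone
(increasing or decreasing). -/
def SingleCrossing {Θ : Type*} [PartialOrder Θ] (f : Θ → ℝ) : Prop :=
  Monotone (fun θ => Real.sign (f θ)) ∨ Antitone (fun θ => Real.sign (f θ))

/-- Strictly single crossing: single crossing and no two ordered zeros. -/
def StrictSingleCrossing {Θ : Type*} [PartialOrder Θ] (f : Θ → ℝ) : Prop :=
  SingleCrossing f ∧ ∀ θ' θ'' : Θ, θ' < θ'' → ¬(f θ' = 0 ∧ f θ'' = 0)

/-- A subset of a partially ordered set is an interval. -/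
def IsIntervalSet {Θ : Type*} [PartialOrder Θ] (S : Set Θ) : Prop :=
  ∀ θl θm θh : Θ, θl ∈ S → θh ∈ S → θl < θm → θm < θh → θm ∈ S

/-- Single-crossing differences. -/
def SCD {A : Type*} {Θ : Type*} [PartialOrder Θ] (u : A → Θ → ℝ) : Prop :=
  ∀ a a' : A, SingleCrossing (fun θ => u a θ - u a' θ)

/-- Strict single-crossing differences. -/
def SSCD {A : Type*} {Θ : Type*} [PartialOrder Θ] (u : A → Θ → ℝ) : Prop :=
  ∀ a a' : A, a ≠ a' → StrictSingleCrossing (fun θ => u a θ - u a' θ)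

/-- The choice correspondence `C_u(S, θ)`. -/
def choiceCorr {A : Type*} {Θ : Type*} (u : A → Θ → ℝ) (S : Set A) (θ : Θ) : Set A :=
  {a ∈ S | ∀ b ∈ S, u b θ ≤ u a θ}

/-- `f₁` ratio dominates `f₂`: conditions (RD) and (RD+). -/
def RatioDominates {Θ : Type*} [PartialOrder Θ] (f₁ f₂ : Θ → ℝ) : Prop :=
  (∀ θl θh : Θ, θl < θh → f₁ θl * f₂ θh ≤ f₁ θh * f₂ θl) ∧
  (∀ θl θm θh : Θ, θl < θm → θm < θh →
    (f₁ θl * f₂ θh = f₁ θh * f₂ θl ↔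
      (f₁ θl * f₂ θm = f₁ θm * f₂ θl ∧ f₁ θm * f₂ θh = f₁ θh * f₂ θm)))

/-- `f₁` and `f₂` are ratio ordered. -/
def RatioOrdered {Θ : Type*} [PartialOrder Θ] (f₁ f₂ : Θ → ℝ) : Prop :=
  RatioDominates f₁ f₂ ∨ RatioDominates f₂ f₁

/-- `f₁` strictly ratio dominates `f₂`. -/
def StrictRatioDominates {Θ : Type*} [PartialOrder Θ] (f₁ f₂ : Θ → ℝ) : Prop :=
  ∀ θl θh : Θ, θl < θh → f₁ θl * f₂ θh < f₁ θh * f₂ θl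

/-- `f₁` and `f₂` are strictly ratio ordered. -/
def StrictRatioOrdered {Θ : Type*} [PartialOrder Θ] (f₁ f₂ : Θ → ℝ) : Prop :=
  StrictRatioDominates f₁ f₂ ∨ StrictRatioDominates f₂ f₁

/-- The environment `(A, Θ, u)` is convex. -/
def ConvexEnv {A : Type*} {Θ : Type*} (u : A → Θ → ℝ) : Prop :=
  ∀ a a' : A, ∀ lam : ℝ, 0 < lam → lam < 1 →
    ∃ a'' : A, ∀ θ : Θ, u a'' θ = lam * u a θ + (1 - lam) * u a' θ

/-- `A` is minimal with respect to `u`: no utility-indistinguishable pair. -/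
def MinimalActions {A : Type*} {Θ : Type*} (u : A → Θ → ℝ) : Prop :=
  ∀ a a' : A, a ≠ a' → ∃ θ : Θ, u a θ ≠ u a' θ

/-- `f : Z × Θ → ℝ` is linear combinations SC-preserving. -/
def LinCombSCPreserving {Z : Type*} {Θ : Type*} [PartialOrder Θ] (f : Z → Θ → ℝ) : Prop :=
  ∀ μ : Z → ℝ, (Function.support μ).Finite →
    SingleCrossing (fun θ => ∑ᶠ z, μ z * f z θ)

/-- `f : Z × Θ → ℝ` is linear combinations SSC-preserving. -/
def LinCombSSCPreserving {Z : Type*} {Θ : Type*} [PartialOrder Θ] (f : Z → Θ → ℝ) : Prop :=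
  ∀ μ : Z → ℝ, (Function.support μ).Finite →
    ((∀ θ : Θ, (∑ᶠ z, μ z * f z θ) = 0) ∨ StrictSingleCrossing (fun θ => ∑ᶠ z, μ z * f z θ))

/-- `f : Z × Θ → ℝ` is linear combinations monotonicity-preserving. -/
def LinCombMonPreserving {Z : Type*} {Θ : Type*} [PartialOrder Θ] (f : Z → Θ → ℝ) : Prop :=
  ∀ μ : Z → ℝ, (Function.support μ).Finite →
    (Monotone (fun θ => ∑ᶠ z, μ z * f z θ) ∨ Antitone (fun θ => ∑ᶠ z, μ z * f z θ))

/-- A finite-support lottery on `X`. -/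
def IsLottery {X : Type*} (P : X → ℝ) : Prop :=
  (∀ x, 0 ≤ P x) ∧ (Function.support P).Finite ∧ (∑ᶠ x, P x) = 1

/-- Single-crossing expectational differences. -/
def SCED {X : Type*} {Θ : Type*} [PartialOrder Θ] (v : X → Θ → ℝ) : Prop :=
  ∀ P Q : X → ℝ, IsLottery P → IsLottery Q →
    SingleCrossing (fun θ => (∑ᶠ x, P x * v x θ) - ∑ᶠ x, Q x * v x θ)

/-!
The condition on `f` says that every function in the span of the `f z` is single crossing. Since
pairs in `Θ` are bounded, single crossing is a condition on chains `l ≤ m ≤ h`: the sign at `m`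
lies between the signs at `l` and `h`.

*Dimension at most two.* A single-crossing function that vanishes at `l` and `h` vanishes between
them. In a finite-dimensional space of such functions, choose two points for which the subspace of
functions vanishing at both is minimal. Moving the points outwards until they enclose an arbitrary
`θ` does not change this subspace, so its members vanish everywhere: a function in the space is
determined by two of its values.

*Ratio order.* Let `[x, y] = f₁ y * f₂ x - f₁ x * f₂ y` (`crossDet`). The functions `[l, ·]`,
`[·, h]` and their sum are combinations of `f₁` and `f₂`. The single crossing property, applied to
them, gives (RD+) and shows that a strict sign of `[a, b]` passes to `[l, h]` whenever
`l ≤ a ≤ b ≤ h`; any two brackets therefore have compatible signs.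

*Sufficiency.* Every `g = α f₁ + β f₂` satisfies `[l, h] g m = [m, h] g l + [l, m] g h`. Under
ratio dominance the brackets are nonnegative. If `[l, h] ≠ 0`, then by (RD+) the right side is a
nontrivial conic combination, whose sign lies between those of `g l` and `g h`. If `[l, h] = 0`,
all three brackets vanish, and `g` is a multiple of `f₁` or of `f₂` on the chain.
-/

open Submodule (span subset_span span_le mem_span_pair)

/-! ### Signs on chains -/

section Order

variable {α β : Type*} [Preorder α] [LinearOrder β] {g : α → β}

lemma mem_uIcc_of_monotone_or_antitone (hg : Monotone g ∨ Antitone g) {l m h : α}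
    (hlm : l ≤ m) (hmh : m ≤ h) : g m ∈ Set.uIcc (g l) (g h) := by
  rcases hg with hg | hg
  · exact Set.mem_uIcc_of_le (hg hlm) (hg hmh)
  · exact Set.mem_uIcc_of_ge (hg hmh) (hg hlm)

lemma monotone_or_antitone_of_mem_uIcc [IsDirectedOrder α] [IsCodirectedOrder α]
    (hg : ∀ l m h, l ≤ m → m ≤ h → g m ∈ Set.uIcc (g l) (g h)) : Monotone g ∨ Antitone g := by
  by_contra! hcon
  simp only [Monotone, Antitone, not_forall, not_le] at hcon
  obtain ⟨⟨a, b, hab, hdesc⟩, ⟨c, d, hcd, hasc⟩⟩ := hcon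
  obtain ⟨l, hla, hlc⟩ := exists_le_le a c
  obtain ⟨h, hbh, hdh⟩ := exists_ge_ge b d
  have ha := hg l a b hla hab
  have hb := hg a b h hab hbh
  have hc := hg l c d hlc hcd
  have hd := hg c d h hcd hdh
  -- The descent from `a` to `b` forces `g h < g l`, the ascent from `c` to `d` the reverse.
  simp only [Set.mem_uIcc] at ha hb hc hd
  grind

end Order

section Sign

lemma real_sign_le_sign_iff {x y : ℝ} :
    Real.sign x ≤ Real.sign y ↔ SignType.sign x ≤ SignType.sign y := by
  rcases lt_trichotomy x 0 with hx | rfl | hx <;> rcases lt_trichotomy y 0 with hy | rfl | hy <;>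
    simp [*, Real.sign_of_neg, Real.sign_of_pos]

variable {K : Type*} [Ring K] [LinearOrder K] [IsStrictOrderedRing K]

lemma sign_mul_mem_uIcc (k : K) {x y z : K}
    (hy : SignType.sign y ∈ Set.uIcc (SignType.sign x) (SignType.sign z)) :
    SignType.sign (k * y) ∈ Set.uIcc (SignType.sign (k * x)) (SignType.sign (k * z)) := by
  simp only [sign_mul, Set.mem_uIcc] at hy ⊢
  generalize SignType.sign k = s, SignType.sign x = a, SignType.sign y = b,
    SignType.sign z = c at hy ⊢
  revert s a b c
  decide

lemma sign_mem_uIcc_of_mul_eq_add {p q r x y z : K} (hp : 0 ≤ p) (hr : 0 ≤ r) (hpr : 0 < p + r)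
    (hq : 0 < q) (h : q * y = p * x + r * z) :
    SignType.sign y ∈ Set.uIcc (SignType.sign x) (SignType.sign z) := by
  wlog hxz : x ≤ z generalizing p r x z
  · rw [Set.uIcc_comm]
    exact this hr hp (by rwa [add_comm]) (by rw [h, add_comm]) (le_of_not_ge hxz)
  have sign_pos_mul {a : K} (ha : 0 < a) (b : K) :
      SignType.sign (a * b) = SignType.sign b := by
    rw [sign_mul, sign_pos ha, one_mul]
  have hlow : (p + r) * x ≤ q * y := by
    rw [h, add_mul]
    gcongr
  have hupp : q * y ≤ (p + r) * z := by
    rw [h, add_mul]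
    gcongr
  rw [← sign_pos_mul hpr x, ← sign_pos_mul hq y, ← sign_pos_mul hpr z]
  exact Set.mem_uIcc_of_le (SignType.sign.monotone hlow) (SignType.sign.monotone hupp)

end Sign

section SingleCrossing

variable {Θ : Type*} [PartialOrder Θ] {g : Θ → ℝ}

lemma singleCrossing_iff_monotone_or_antitone_sign :
    SingleCrossing g ↔
      Monotone (fun θ => SignType.sign (g θ)) ∨ Antitone (fun θ => SignType.sign (g θ)) := by
  simp only [SingleCrossing, Monotone, Antitone, real_sign_le_sign_iff]

lemma SingleCrossing.sign_mem_uIcc (hg : SingleCrossing g) {l m h : Θ} (hlm : l ≤ m)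
    (hmh : m ≤ h) : SignType.sign (g m) ∈ Set.uIcc (SignType.sign (g l)) (SignType.sign (g h)) :=
  mem_uIcc_of_monotone_or_antitone (singleCrossing_iff_monotone_or_antitone_sign.1 hg) hlm hmh

lemma singleCrossing_of_sign_mem_uIcc [IsDirectedOrder Θ] [IsCodirectedOrder Θ]
    (hg : ∀ l m h, l ≤ m → m ≤ h →
      SignType.sign (g m) ∈ Set.uIcc (SignType.sign (g l)) (SignType.sign (g h))) :
    SingleCrossing g :=
  singleCrossing_iff_monotone_or_antitone_sign.2 (monotone_or_antitone_of_mem_uIcc hg)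

lemma SingleCrossing.eq_zero_iff_of_eq (hg : SingleCrossing g) {l m h : Θ} (hlm : l ≤ m)
    (hmh : m ≤ h) (hlh : g l = g h) : g m = 0 ↔ g l = 0 := by
  have hsign := hg.sign_mem_uIcc hlm hmh
  rw [← hlh, Set.uIcc_self, Set.mem_singleton_iff] at hsign
  rw [← sign_eq_zero_iff, hsign, sign_eq_zero_iff]

lemma SingleCrossing.pos_or_pos (hg : SingleCrossing g) {l m h : Θ} (hlm : l ≤ m) (hmh : m ≤ h)
    (hm : 0 < g m) : 0 < g l ∨ 0 < g h := by
  have hsign := hg.sign_mem_uIcc hlm hmh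
  rw [sign_pos hm, Set.mem_uIcc] at hsign
  simp only [← sign_eq_one_iff]
  exact hsign.symm.imp (fun hs => le_antisymm (SignType.le_one _) hs.2)
    fun hs => le_antisymm (SignType.le_one _) hs.2

lemma SingleCrossing.ordConnected_zeros (hg : SingleCrossing g) : (g ⁻¹' {0}).OrdConnected :=
  ⟨fun _ hl _ hh _ hm => (hg.eq_zero_iff_of_eq hm.1 hm.2 (hl.trans hh.symm)).2 hl⟩

end SingleCrossing

/-! ### Spaces of functions with order-connected zero sets -/

section Dimension

variable {K : Type*} [DivisionRing K]

lemma finrank_le_two_of_ordConnected_zeros {Θ : Type*} [Preorder Θ] [IsDirectedOrder Θ]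
    [IsCodirectedOrder Θ] {V : Submodule K (Θ → K)} [FiniteDimensional K V]
    (hV : ∀ g ∈ V, (g ⁻¹' {0}).OrdConnected) : Module.finrank K V ≤ 2 := by
  rcases isEmpty_or_nonempty Θ with _ | _
  · simp [Module.finrank_zero_of_subsingleton]
  let ev (p : Θ × Θ) : V →ₗ[K] K × K :=
    ((LinearMap.proj p.1).prod (LinearMap.proj p.2)).comp V.subtype
  have mem_ker_ev (p : Θ × Θ) (g : V) :
      g ∈ LinearMap.ker (ev p) ↔ (g : Θ → K) p.1 = 0 ∧ (g : Θ → K) p.2 = 0 := by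
    simp [ev]
  obtain ⟨p, -, hp⟩ := exists_minimalFor_of_wellFoundedLT (fun _ => True)
    (fun p => LinearMap.ker (ev p)) ⟨Classical.arbitrary _, trivial⟩
  have eq_zero_of_mem_ker (g : V) (hg : g ∈ LinearMap.ker (ev p)) : g = 0 := by
    ext θ
    obtain ⟨l₀, hl₁, hl₂⟩ := exists_le_le p.1 p.2
    obtain ⟨h₀, hh₁, hh₂⟩ := exists_ge_ge p.1 p.2
    obtain ⟨l, hll₀, hlθ⟩ := exists_le_le l₀ θ
    obtain ⟨h, hh₀h, hθh⟩ := exists_ge_ge h₀ θ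
    have zero_between (k : V) (hk : k ∈ LinearMap.ker (ev (l, h))) {x : Θ} (hlx : l ≤ x)
        (hxh : x ≤ h) : (k : Θ → K) x = 0 :=
      (hV k k.2).out ((mem_ker_ev _ _).1 hk).1 ((mem_ker_ev _ _).1 hk).2 ⟨hlx, hxh⟩
    have ker_le : LinearMap.ker (ev (l, h)) ≤ LinearMap.ker (ev p) := fun k hk =>
      (mem_ker_ev _ _).2 ⟨zero_between k hk (hll₀.trans hl₁) (hh₁.trans hh₀h),
        zero_between k hk (hll₀.trans hl₂) (hh₂.trans hh₀h)⟩
    exact zero_between g (hp trivial ker_le hg) hlθ hθh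
  have ev_injective : Function.Injective (ev p) :=
    LinearMap.ker_eq_bot.1 ((Submodule.eq_bot_iff _).2 eq_zero_of_mem_ker)
  simpa using LinearMap.finrank_le_finrank_of_injective ev_injective

lemma not_linearIndependent_fin_three_of_ordConnected_zeros {Θ : Type*} [Preorder Θ]
    [IsDirectedOrder Θ] [IsCodirectedOrder Θ] {V : Submodule K (Θ → K)}
    (hV : ∀ g ∈ V, (g ⁻¹' {0}).OrdConnected) {v : Fin 3 → Θ → K} (hv : ∀ i, v i ∈ V) :
    ¬LinearIndependent K v := by
  intro hind
  have := FiniteDimensional.span_of_finite K (Set.finite_range v)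
  have hspan : span K (Set.range v) ≤ V := span_le.2 (Set.range_subset_iff.2 hv)
  have hrank : Module.finrank K (span K (Set.range v)) ≤ 2 :=
    finrank_le_two_of_ordConnected_zeros fun g hg => hV g (hspan hg)
  rw [finrank_span_eq_card hind] at hrank
  simp at hrank

lemma exists_forall_mem_span_pair {ι M : Type*} [Nonempty ι] [AddCommGroup M] [Module K M]
    {v : ι → M} (hv : ∀ i j k, ¬LinearIndependent K ![v i, v j, v k]) :
    ∃ i j, ∀ k, v k ∈ span K {v i, v j} := by
  by_cases hpair : ∃ i j, LinearIndependent K ![v i, v j]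
  · obtain ⟨i, j, hij⟩ := hpair
    refine ⟨i, j, fun k => ?_⟩
    by_contra hk
    refine hv k i j (linearIndependent_finCons.2 ⟨hij, ?_⟩)
    rwa [Matrix.range_cons_cons_empty]
  push Not at hpair
  by_cases hzero : ∃ i, v i ≠ 0
  · obtain ⟨i, hi⟩ := hzero
    refine ⟨i, i, fun k => ?_⟩
    obtain ⟨c, hc⟩ : ∃ c : K, c • v i = v k := by
      simpa [LinearIndependent.pair_iff' hi] using hpair i k
    rw [← hc]
    exact Submodule.smul_mem _ _ (subset_span (Set.mem_insert _ _))
  · push Not at hzero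
    let i : ι := Classical.arbitrary ι
    exact ⟨i, i, fun k => hzero k ▸ Submodule.zero_mem _⟩

end Dimension

/-! ### Determinants and ratio order -/

section CrossDet

variable {Θ R : Type*} [CommRing R] {f₁ f₂ g : Θ → R}

/-- The determinant of the vectors `(f₁ y, f₂ y)` and `(f₁ x, f₂ x)`: the numerator of
`f₁ y / f₂ y - f₁ x / f₂ x`, so that ratio dominance makes it nonnegative for `x ≤ y`. -/
def crossDet (f₁ f₂ : Θ → R) (x y : Θ) : R :=
  f₁ y * f₂ x - f₁ x * f₂ y

@[simp] lemma crossDet_self (x : Θ) : crossDet f₁ f₂ x x = 0 :=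
  sub_self _

lemma crossDet_eq_zero_iff {x y : Θ} :
    crossDet f₁ f₂ x y = 0 ↔ f₁ x * f₂ y = f₁ y * f₂ x :=
  sub_eq_zero.trans eq_comm

lemma crossDet_nonneg_iff [PartialOrder R] [IsOrderedAddMonoid R] {x y : Θ} :
    0 ≤ crossDet f₁ f₂ x y ↔ f₁ x * f₂ y ≤ f₁ y * f₂ x :=
  sub_nonneg

lemma crossDet_swap (x y : Θ) : crossDet f₁ f₂ y x = -crossDet f₁ f₂ x y := by
  unfold crossDet
  ring

lemma crossDet_comm (x y : Θ) : crossDet f₂ f₁ x y = -crossDet f₁ f₂ x y := by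
  unfold crossDet
  ring

lemma crossDet_mem {V : Submodule R (Θ → R)} (h₁ : f₁ ∈ V) (h₂ : f₂ ∈ V) (x : Θ) :
    crossDet f₁ f₂ x ∈ V := by
  have heq : crossDet f₁ f₂ x = f₂ x • f₁ - f₁ x • f₂ := by
    ext y
    simp [crossDet, mul_comm]
  exact heq ▸ V.sub_mem (V.smul_mem _ h₁) (V.smul_mem _ h₂)

lemma crossDet_mul_eq_of_mem_span_pair (hg : g ∈ span R {f₁, f₂}) (l m h : Θ) :
    crossDet f₁ f₂ l h * g m = crossDet f₁ f₂ m h * g l + crossDet f₁ f₂ l m * g h := by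
  obtain ⟨a, b, rfl⟩ := mem_span_pair.1 hg
  simp only [crossDet, Pi.add_apply, Pi.smul_apply, smul_eq_mul]
  ring

end CrossDet

lemma exists_eqOn_smul_of_crossDet_eq_zero {Θ K : Type*} [Field K] {f₁ f₂ g : Θ → K} {S : Set Θ}
    (hS : ∀ x ∈ S, ∀ y ∈ S, crossDet f₁ f₂ x y = 0) (hg : g ∈ span K {f₁, f₂}) :
    (∃ k : K, Set.EqOn g (k • f₁) S) ∨ ∃ k : K, Set.EqOn g (k • f₂) S := by
  obtain ⟨a, b, rfl⟩ := mem_span_pair.1 hg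
  by_cases hf₁ : ∃ y ∈ S, f₁ y ≠ 0
  · obtain ⟨y, hyS, hy⟩ := hf₁
    refine .inl ⟨a + b * (f₂ y / f₁ y), fun x hx => ?_⟩
    have hxy : f₂ x = f₂ y / f₁ y * f₁ x := by
      have := hS x hx y hyS
      unfold crossDet at this
      field_simp
      linear_combination this
    simp only [Pi.add_apply, Pi.smul_apply, smul_eq_mul, hxy]
    ring
  · push Not at hf₁
    exact .inr ⟨b, fun x hx => by simp [hf₁ x hx]⟩

section RatioOrder

variable {Θ : Type*} [PartialOrder Θ] {f₁ f₂ g : Θ → ℝ}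

lemma ratioDominates_iff_crossDet :
    RatioDominates f₁ f₂ ↔
      (∀ l h, l ≤ h → 0 ≤ crossDet f₁ f₂ l h) ∧
      ∀ l m h, l ≤ m → m ≤ h →
        (crossDet f₁ f₂ l h = 0 ↔ crossDet f₁ f₂ l m = 0 ∧ crossDet f₁ f₂ m h = 0) := by
  simp only [RatioDominates, ← crossDet_nonneg_iff, ← crossDet_eq_zero_iff]
  refine ⟨fun ⟨hle, heq⟩ => ⟨fun l h hlh => ?_, fun l m h hlm hmh => ?_⟩,
    fun ⟨hle, heq⟩ => ⟨fun l h hlh => hle l h hlh.le,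
      fun l m h hlm hmh => heq l m h hlm.le hmh.le⟩⟩
  · rcases hlh.eq_or_lt with rfl | hlh
    · exact (crossDet_self _).ge
    · exact hle l h hlh
  · rcases hlm.eq_or_lt with rfl | hlm
    · simp
    rcases hmh.eq_or_lt with rfl | hmh
    · simp
    exact heq l m h hlm hmh

lemma sign_mem_uIcc_of_ratioDominates (h₁ : SingleCrossing f₁) (h₂ : SingleCrossing f₂)
    (hr : RatioDominates f₁ f₂) (hg : g ∈ span ℝ {f₁, f₂}) {l m h : Θ} (hlm : l ≤ m)
    (hmh : m ≤ h) :
    SignType.sign (g m) ∈ Set.uIcc (SignType.sign (g l)) (SignType.sign (g h)) := by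
  obtain ⟨hle, heq⟩ := ratioDominates_iff_crossDet.1 hr
  have hlm₀ := hle l m hlm
  have hmh₀ := hle m h hmh
  rcases (hle l h (hlm.trans hmh)).eq_or_lt with hlh | hlh
  · obtain ⟨hlm_eq, hmh_eq⟩ := (heq l m h hlm hmh).1 hlh.symm
    have hchain : ∀ x ∈ ({l, m, h} : Set Θ), ∀ y ∈ ({l, m, h} : Set Θ),
        crossDet f₁ f₂ x y = 0 := by
      simp [hlm_eq, hmh_eq, hlh.symm, crossDet_swap l m, crossDet_swap l h, crossDet_swap m h]
    have of_multiple {F : Θ → ℝ} (hF : SingleCrossing F) {k : ℝ}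
        (hk : Set.EqOn g (k • F) {l, m, h}) :
        SignType.sign (g m) ∈ Set.uIcc (SignType.sign (g l)) (SignType.sign (g h)) := by
      rw [hk (by simp : l ∈ _), hk (by simp : m ∈ _), hk (by simp : h ∈ _)]
      exact sign_mul_mem_uIcc k (hF.sign_mem_uIcc hlm hmh)
    rcases exists_eqOn_smul_of_crossDet_eq_zero hchain hg with ⟨k, hk⟩ | ⟨k, hk⟩
    · exact of_multiple h₁ hk
    · exact of_multiple h₂ hk
  · have hpos : 0 < crossDet f₁ f₂ m h + crossDet f₁ f₂ l m := by
      refine (add_nonneg hmh₀ hlm₀).lt_of_ne' fun hsum => hlh.ne' ?_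
      rw [add_eq_zero_iff_of_nonneg hmh₀ hlm₀] at hsum
      exact (heq l m h hlm hmh).2 hsum.symm
    exact sign_mem_uIcc_of_mul_eq_add hmh₀ hlm₀ hpos hlh
      (crossDet_mul_eq_of_mem_span_pair hg l m h)

lemma singleCrossing_of_mem_span_pair [IsDirectedOrder Θ] [IsCodirectedOrder Θ]
    (h₁ : SingleCrossing f₁) (h₂ : SingleCrossing f₂) (hr : RatioOrdered f₁ f₂)
    (hg : g ∈ span ℝ {f₁, f₂}) : SingleCrossing g := by
  refine singleCrossing_of_sign_mem_uIcc fun l m h hlm hmh => ?_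
  rcases hr with hr | hr
  · exact sign_mem_uIcc_of_ratioDominates h₁ h₂ hr hg hlm hmh
  · rw [Set.pair_comm] at hg
    exact sign_mem_uIcc_of_ratioDominates h₂ h₁ hr hg hlm hmh

variable {V : Submodule ℝ (Θ → ℝ)}

lemma crossDet_eq_zero_iff_of_mem (hV : ∀ g ∈ V, SingleCrossing g) (h₁ : f₁ ∈ V) (h₂ : f₂ ∈ V)
    {l m h : Θ} (hlm : l ≤ m) (hmh : m ≤ h) :
    crossDet f₁ f₂ l h = 0 ↔ crossDet f₁ f₂ l m = 0 ∧ crossDet f₁ f₂ m h = 0 := by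
  have hmem := crossDet_mem h₁ h₂
  constructor
  · intro hlh
    have hhl : crossDet f₁ f₂ h l = 0 := by rw [crossDet_swap, hlh, neg_zero]
    have hlm_eq := ((hV _ (hmem l)).eq_zero_iff_of_eq hlm hmh (by simp [hlh])).2 (crossDet_self l)
    have hhm := ((hV _ (hmem h)).eq_zero_iff_of_eq hlm hmh (by simp [hhl])).2 hhl
    exact ⟨hlm_eq, by rw [crossDet_swap, hhm, neg_zero]⟩
  · rintro ⟨hlm_eq, hmh_eq⟩
    -- `[l, ·] + [·, h]` takes the value `[l, h]` at both ends and vanishes at `m`.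
    have hsum := (hV _ (V.sub_mem (hmem l) (hmem h))).eq_zero_iff_of_eq hlm hmh
      (by simp [crossDet_swap l h])
    simpa [hlm_eq, crossDet_swap m h, hmh_eq, crossDet_swap l h] using hsum

lemma crossDet_pos_of_mem (hV : ∀ g ∈ V, SingleCrossing g) (h₁ : f₁ ∈ V) (h₂ : f₂ ∈ V)
    {l a b h : Θ} (hla : l ≤ a) (hab : a ≤ b) (hbh : b ≤ h) (hpos : 0 < crossDet f₁ f₂ a b) :
    0 < crossDet f₁ f₂ l h := by
  have hah : 0 < crossDet f₁ f₂ a h :=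
    ((hV _ (crossDet_mem h₁ h₂ a)).pos_or_pos hab hbh hpos).resolve_left (by simp)
  have hlh := ((hV _ (V.neg_mem (crossDet_mem h₁ h₂ h))).pos_or_pos hla (hab.trans hbh)
    (by simpa [← crossDet_swap] using hah)).resolve_right (by simp)
  simpa [← crossDet_swap] using hlh

lemma ratioOrdered_of_mem [IsDirectedOrder Θ] [IsCodirectedOrder Θ]
    (hV : ∀ g ∈ V, SingleCrossing g) (h₁ : f₁ ∈ V) (h₂ : f₂ ∈ V) : RatioOrdered f₁ f₂ := by
  have ratioDominates_of_nonneg {F G : Θ → ℝ} (hF : F ∈ V) (hG : G ∈ V)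
      (hFG : ∀ l h, l ≤ h → 0 ≤ crossDet F G l h) : RatioDominates F G :=
    ratioDominates_iff_crossDet.2
      ⟨hFG, fun _ _ _ hlm hmh => crossDet_eq_zero_iff_of_mem hV hF hG hlm hmh⟩
  by_cases hsign : ∀ l h, l ≤ h → 0 ≤ crossDet f₁ f₂ l h
  · exact .inl (ratioDominates_of_nonneg h₁ h₂ hsign)
  push Not at hsign
  obtain ⟨c, d, hcd, hneg⟩ := hsign
  refine .inr (ratioDominates_of_nonneg h₂ h₁ fun a b hab => ?_)
  rw [crossDet_comm, neg_nonneg]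
  by_contra! hpos
  -- The brackets `[a, b] > 0` and `[c, d] < 0` both pass their sign on to `[l, h]`.
  obtain ⟨l, hla, hlc⟩ := exists_le_le a c
  obtain ⟨h, hbh, hdh⟩ := exists_ge_ge b d
  have hlh₁ : 0 < crossDet f₁ f₂ l h := crossDet_pos_of_mem hV h₁ h₂ hla hab hbh hpos
  have hlh₂ : 0 < crossDet f₂ f₁ l h :=
    crossDet_pos_of_mem hV h₂ h₁ hlc hcd hdh (by rwa [crossDet_comm, neg_pos])
  rw [crossDet_comm, neg_pos] at hlh₂
  exact hlh₁.not_gt hlh₂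

end RatioOrder

lemma linCombSCPreserving_iff_forall_mem_span {Θ Z : Type*} [PartialOrder Θ] {f : Z → Θ → ℝ} :
    LinCombSCPreserving f ↔ ∀ g ∈ span ℝ (Set.range f), SingleCrossing g := by
  have finsum_eq (c : Z →₀ ℝ) :
      (fun θ => ∑ᶠ z, c z * f z θ) = c.sum fun z a => a • f z := by
    ext θ
    rw [finsum_eq_sum_of_support_subset (s := c.support) _
      fun z hz => by simpa using left_ne_zero_of_mul hz]
    simp [Finsupp.sum]
  constructor
  · intro H g hg
    obtain ⟨c, rfl⟩ := Finsupp.mem_span_range_iff_exists_finsupp.1 hg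
    exact finsum_eq c ▸ H c c.hasFiniteSupport
  · intro H μ hμ
    have hsum := finsum_eq (Finsupp.ofSupportFinite μ hμ)
    rw [Finsupp.ofSupportFinite_coe] at hsum
    exact hsum ▸ H _ (Finsupp.mem_span_range_iff_exists_finsupp.2 ⟨_, rfl⟩)

/-- `f` is linear combinations SC-preserving iff it is linearly
generated by two single-crossing, ratio-ordered functions. -/
theorem linCombSCPreserving_iff {Θ Z : Type*} [PartialOrder Θ] [Nonempty Z]
    (hub : ∀ θ₁ θ₂ : Θ, ∃ θ : Θ, θ₁ ≤ θ ∧ θ₂ ≤ θ)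
    (hlb : ∀ θ₁ θ₂ : Θ, ∃ θ : Θ, θ ≤ θ₁ ∧ θ ≤ θ₂)
    (f : Z → Θ → ℝ) :
    LinCombSCPreserving f ↔
      ∃ (z₁ z₂ : Z) (lam₁ lam₂ : Z → ℝ),
        (SingleCrossing (f z₁) ∧ SingleCrossing (f z₂) ∧ RatioOrdered (f z₁) (f z₂)) ∧
        (∀ (z : Z) (θ : Θ), f z θ = lam₁ z * f z₁ θ + lam₂ z * f z₂ θ) := by
  have : IsDirectedOrder Θ := ⟨hub⟩
  have : IsCodirectedOrder Θ := ⟨hlb⟩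
  rw [linCombSCPreserving_iff_forall_mem_span]
  constructor
  · intro H
    have hmem (z : Z) : f z ∈ span ℝ (Set.range f) := subset_span (Set.mem_range_self z)
    obtain ⟨z₁, z₂, hspan⟩ : ∃ z₁ z₂, ∀ z, f z ∈ span ℝ {f z₁, f z₂} :=
      exists_forall_mem_span_pair fun i j k =>
        not_linearIndependent_fin_three_of_ordConnected_zeros
          (fun g hg => (H g hg).ordConnected_zeros) (by simp [Fin.forall_fin_succ, hmem])
    choose lam₁ lam₂ hlam using fun z => mem_span_pair.1 (hspan z)
    exact ⟨z₁, z₂, lam₁, lam₂,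
      ⟨H _ (hmem z₁), H _ (hmem z₂), ratioOrdered_of_mem H (hmem z₁) (hmem z₂)⟩,
      fun z θ => (congrFun (hlam z) θ).symm⟩
  · rintro ⟨z₁, z₂, lam₁, lam₂, ⟨h₁, h₂, hr⟩, hf⟩ g hg
    have hrange : Set.range f ⊆ span ℝ {f z₁, f z₂} := Set.range_subset_iff.2 fun z =>
      mem_span_pair.2 ⟨lam₁ z, lam₂ z, funext fun θ => (hf z θ).symm⟩
    exact singleCrossing_of_mem_span_pair h₁ h₂ hr (span_le.2 hrange hg)
end

section
/- Let Θ be a partially ordered set in which every pair of elements has an upper bound and a lower bound in Θ, and suppose Θ has a minimum element θ̲ and a maximum element θ̄ (i.e., θ̲ ≤ θ ≤ θ̄ for all θ ∈ Θ). Let A be a set and let u : A × Θ → ℝ be such that the environment (A, Θ, u) is convex. Then u has single-crossing differences (SCD) if and only if there exist functions b : Θ → ℝ with b(θ) > 0 for all θ, c : Θ → ℝ, and an increasing function λ : Θ → [0,1] such that, defining ũ(a,θ) = b(θ)·u(a,θ) + c(θ), one has ũ(a, θ) = λ(θ)·ũ(a, θ̄) + (1 − λ(θ))·ũ(a, θ̲)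 for all a ∈ A and θ ∈ Θ. -/
section LinearAlgebra

open Module

lemma surjective_or_finrank_lt_of_injective {K V W : Type*} [DivisionRing K] [AddCommGroup V]
    [Module K V] [AddCommGroup W] [Module K W] [FiniteDimensional K W] {φ : V →ₗ[K] W}
    (hφ : Function.Injective φ) : Function.Surjective φ ∨ finrank K V < finrank K W := by
  have : FiniteDimensional K V := FiniteDimensional.of_injective φ hφ
  rcases (LinearMap.finrank_le_finrank_of_injective hφ).eq_or_lt with heq | hlt
  · exact .inl ((LinearMap.injective_iff_surjective_of_finrank_eq_finrank heq).1 hφ)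
  · exact .inr hlt

open scoped Pointwise in
lemma exists_nonneg_smul_sub_of_mem_vectorSpan {𝕜 E : Type*} [Field 𝕜] [LinearOrder 𝕜]
    [IsStrictOrderedRing 𝕜] [AddCommGroup E] [Module 𝕜 E] {s : Set E} (hs : Convex 𝕜 s)
    (hne : s.Nonempty) {v : E} (hv : v ∈ vectorSpan 𝕜 s) :
    ∃ r : 𝕜, 0 ≤ r ∧ ∃ x ∈ s, ∃ y ∈ s, v = r • (x - y) := by
  induction hv using Submodule.span_induction with
  | mem v hv =>
    obtain ⟨x, hx, y, hy, rfl⟩ := hv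
    exact ⟨1, zero_le_one, x, hx, y, hy, (one_smul 𝕜 _).symm⟩
  | zero =>
    obtain ⟨x, hx⟩ := hne
    exact ⟨0, le_rfl, x, hx, x, hx, (zero_smul 𝕜 _).symm⟩
  | add v w _ _ ihv ihw =>
    obtain ⟨p, hp, x, hx, y, hy, rfl⟩ := ihv
    obtain ⟨q, hq, x', hx', y', hy', rfl⟩ := ihw
    obtain ⟨z, hz, hxz⟩ := hs.exists_mem_add_smul_eq hx hx' hp hq
    obtain ⟨z', hz', hyz⟩ := hs.exists_mem_add_smul_eq hy hy' hp hq
    refine ⟨p + q, add_nonneg hp hq, z, hz, z', hz', ?_⟩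
    rw [smul_sub (p + q), hxz, hyz]
    module
  | smul k v _ ih =>
    obtain ⟨r, hr, x, hx, y, hy, rfl⟩ := ih
    rcases le_total 0 k with hk | hk
    · exact ⟨k * r, mul_nonneg hk hr, x, hx, y, hy, smul_smul k r _⟩
    · exact ⟨-k * r, mul_nonneg (neg_nonneg.2 hk) hr, y, hy, x, hx, by module⟩

end LinearAlgebra

section Weights

variable {Θ 𝕜 : Type*} [Preorder Θ]

lemma monotone_or_antitone_mix [CommRing 𝕜] [LinearOrder 𝕜] [IsOrderedRing 𝕜]
    {lam : Θ → 𝕜} (hlam : Monotone lam) (p q : 𝕜) :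
    Monotone (fun θ => lam θ * p + (1 - lam θ) * q) ∨
      Antitone (fun θ => lam θ * p + (1 - lam θ) * q) := by
  have hmix (θ : Θ) : lam θ * p + (1 - lam θ) * q = lam θ * (p - q) + q := by ring
  simp only [hmix]
  rcases le_total q p with hqp | hpq
  · exact .inl ((hlam.mul_const (sub_nonneg.2 hqp)).add_const q)
  · exact .inr ((hlam.mul_const_of_nonpos (sub_nonpos.2 hpq)).add_const q)

variable [Field 𝕜] [LinearOrder 𝕜] [IsStrictOrderedRing 𝕜]

lemma exists_monotone_weight_of_monotone {θmin θmax : Θ} (hmin : IsBot θmin) (hmax : IsTop θmax)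
    {s : Θ → 𝕜} (hs : Monotone s) :
    ∃ lam : Θ → 𝕜, (∀ θ, lam θ ∈ Set.Icc 0 1) ∧ Monotone lam ∧
      ∀ θ, s θ = lam θ * s θmax + (1 - lam θ) * s θmin := by
  have hrange : 0 ≤ s θmax - s θmin := sub_nonneg.2 (hs (hmin θmax))
  refine ⟨fun θ => (s θ - s θmin) / (s θmax - s θmin), fun θ => ⟨?_, ?_⟩, fun x y hxy => ?_,
    fun θ => ?_⟩
  · exact div_nonneg (sub_nonneg.2 (hs (hmin θ))) hrange
  · exact div_le_one_of_le₀ (sub_le_sub_right (hs (hmax θ)) _) hrange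
  · exact div_le_div_of_nonneg_right (sub_le_sub_right (hs hxy) _) hrange
  · rcases hrange.eq_or_lt with hconst | hlt
    · -- `s` is constant, and the division by zero yields the weight `0`.
      simp only [← hconst, div_zero]
      linarith [hs (hmin θ), hs (hmax θ)]
    · field_simp
      ring

lemma exists_monotone_weight {θmin θmax : Θ} (hmin : IsBot θmin) (hmax : IsTop θmax) {s : Θ → 𝕜}
    (hs : Monotone s ∨ Antitone s) :
    ∃ lam : Θ → 𝕜, (∀ θ, lam θ ∈ Set.Icc 0 1) ∧ Monotone lam ∧
      ∀ θ, s θ = lam θ * s θmax + (1 - lam θ) * s θmin := by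
  rcases hs with hs | hs
  · exact exists_monotone_weight_of_monotone hmin hmax hs
  · obtain ⟨lam, hlam, hmono, hmix⟩ := exists_monotone_weight_of_monotone hmin hmax hs.neg
    refine ⟨lam, hlam, hmono, fun θ => ?_⟩
    linear_combination -hmix θ

end Weights

section Sign

lemma monotone_real_sign : Monotone Real.sign := by
  intro x y hxy
  simp only [Real.sign]
  split_ifs <;> linarith

lemma real_sign_nonneg_iff {x : ℝ} : 0 ≤ Real.sign x ↔ 0 ≤ x := by
  simp only [Real.sign]
  split_ifs <;> constructor <;> intro <;> linarith

lemma real_sign_pos_iff {x : ℝ} : 0 < Real.sign x ↔ 0 < x := by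
  simp only [Real.sign]
  split_ifs <;> constructor <;> intro <;> linarith

lemma real_sign_mul_of_pos {b : ℝ} (hb : 0 < b) (x : ℝ) : Real.sign (b * x) = Real.sign x := by
  have hneg : b * x < 0 ↔ x < 0 := smul_neg_iff_of_pos_left hb
  simp only [Real.sign, hneg, mul_pos_iff_of_pos_left hb]

lemma exists_pos_mul_eq_real_sign (x : ℝ) : ∃ b : ℝ, 0 < b ∧ b * x = Real.sign x := by
  rcases eq_or_ne x 0 with rfl | hx
  · exact ⟨1, one_pos, by simp⟩
  · refine ⟨(Real.sign x * x)⁻¹, inv_pos.2 (Real.sign_mul_pos_of_ne_zero x hx), ?_⟩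
    rw [mul_inv, inv_mul_cancel_right₀ hx, Real.inv_sign]

end Sign

section SingleCrossingFunctions

variable {Θ : Type*} [PartialOrder Θ] {f : Θ → ℝ}

namespace SingleCrossing

lemma of_monotone_or_antitone (hf : Monotone f ∨ Antitone f) : SingleCrossing f :=
  hf.imp monotone_real_sign.comp monotone_real_sign.comp_antitone

lemma mul_iff_of_pos {b : Θ → ℝ} (hb : ∀ θ, 0 < b θ) :
    SingleCrossing (fun θ => b θ * f θ) ↔ SingleCrossing f := by
  simp only [SingleCrossing, real_sign_mul_of_pos (hb _)]

lemma smul_of_nonneg (hf : SingleCrossing f) {r : ℝ} (hr : 0 ≤ r) : SingleCrossing (r • f) := by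
  rcases hr.eq_or_lt with rfl | hr
  · rw [zero_smul]
    exact of_monotone_or_antitone (.inl monotone_const)
  · exact (mul_iff_of_pos fun _ => hr).2 hf

lemma min_sign_le (hf : SingleCrossing f) {x y z : Θ} (hxy : x ≤ y) (hyz : y ≤ z) :
    min (Real.sign (f x)) (Real.sign (f z)) ≤ Real.sign (f y) :=
  hf.elim (fun h => min_le_of_left_le (h hxy)) fun h => min_le_of_right_le (h hyz)

lemma le_max_sign (hf : SingleCrossing f) {x y z : Θ} (hxy : x ≤ y) (hyz : y ≤ z) :
    Real.sign (f y) ≤ max (Real.sign (f x)) (Real.sign (f z)) :=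
  hf.elim (fun h => le_max_of_le_right (h hyz)) fun h => le_max_of_le_left (h hxy)

lemma pos_of_pos_of_pos (hf : SingleCrossing f) {x y z : Θ} (hxy : x ≤ y) (hyz : y ≤ z)
    (hx : 0 < f x) (hz : 0 < f z) : 0 < f y := by
  rw [← real_sign_pos_iff] at hx hz ⊢
  exact (lt_min hx hz).trans_le (hf.min_sign_le hxy hyz)

lemma eq_zero_of_eq_zero_of_eq_zero (hf : SingleCrossing f) {x y z : Θ} (hxy : x ≤ y)
    (hyz : y ≤ z) (hx : f x = 0) (hz : f z = 0) : f y = 0 := by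
  rw [← Real.sign_eq_zero_iff] at hx hz ⊢
  apply le_antisymm
  · simpa [hx, hz] using hf.le_max_sign hxy hyz
  · simpa [hx, hz] using hf.min_sign_le hxy hyz

end SingleCrossing

lemma monotone_of_forall_singleCrossing_sub {θmin θmax : Θ} (hmin : IsBot θmin)
    (hmax : IsTop θmax) (hlt : f θmin < f θmax) (hf : ∀ m : ℝ, SingleCrossing (fun θ => f θ - m)) :
    Monotone f := by
  intro x y hxy
  have hsign : Real.sign (f x - f x) = 0 := by simp
  rcases hf (f x) with hmono | hanti
  · exact sub_nonneg.1 (real_sign_nonneg_iff.1 (hsign.ge.trans (hmono hxy)))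
  · have hx_le : f x ≤ f θmin :=
      sub_nonneg.1 (real_sign_nonneg_iff.1 (hsign.ge.trans (hanti (hmin x))))
    have hx_lt : 0 < Real.sign (f θmax - f x) :=
      real_sign_pos_iff.2 (sub_pos.2 (hx_le.trans_lt hlt))
    exact absurd ((hanti (hmax x)).trans hsign.le) hx_lt.not_ge

end SingleCrossingFunctions

section ExtremeMixtures

variable {Θ : Type*} {θmin θmax : Θ}

/-- The functions which, after multiplication by `b`, take at each `θ` the mixture of their values
at `θmin` and `θmax` that puts the weight `lam θ` on `θmax`. -/
def extremeMixtures (θmin θmax : Θ) (b lam : Θ → ℝ) : Submodule ℝ (Θ → ℝ) where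
  carrier := {g | ∀ θ,
    b θ * g θ = lam θ * (b θmax * g θmax) + (1 - lam θ) * (b θmin * g θmin)}
  zero_mem' θ := by simp
  add_mem' {g h} hg hh θ := by
    simp only [Pi.add_apply]
    linear_combination hg θ + hh θ
  smul_mem' k g hg θ := by
    simp only [Pi.smul_apply, smul_eq_mul]
    linear_combination k * hg θ

/-- Evaluation on `V` at the two extreme types; it bounds the dimension of a space `V` of single
crossing functions. -/
def extremeValues (θmin θmax : Θ) (V : Submodule ℝ (Θ → ℝ)) : V →ₗ[ℝ] ℝ × ℝ :=
  ((LinearMap.proj θmin).prod (LinearMap.proj θmax)).domRestrict V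

lemma vectorSpan_range_le_extremeMixtures_iff {A : Type*} {u : A → Θ → ℝ} {b lam : Θ → ℝ} :
    vectorSpan ℝ (Set.range u) ≤ extremeMixtures θmin θmax b lam ↔
      ∃ c : Θ → ℝ, ∀ a θ, b θ * u a θ + c θ =
        lam θ * (b θmax * u a θmax + c θmax) + (1 - lam θ) * (b θmin * u a θmin + c θmin) := by
  constructor
  · intro hle
    rcases isEmpty_or_nonempty A with _ | ⟨⟨a₀⟩⟩
    · exact ⟨0, isEmptyElim⟩
    · refine ⟨fun θ => -(b θ * u a₀ θ), fun a θ => ?_⟩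
      have hdiff := hle (vsub_mem_vectorSpan ℝ (Set.mem_range_self a) (Set.mem_range_self a₀)) θ
      simp only [vsub_eq_sub, Pi.sub_apply] at hdiff
      linear_combination hdiff
  · rintro ⟨c, hc⟩
    rw [vectorSpan_def, Submodule.span_le]
    rintro _ ⟨_, ⟨a, rfl⟩, _, ⟨a', rfl⟩, rfl⟩ θ
    simp only [vsub_eq_sub, Pi.sub_apply]
    linear_combination hc a θ - hc a' θ

variable [PartialOrder Θ] {V : Submodule ℝ (Θ → ℝ)}

lemma singleCrossing_of_mem_extremeMixtures {b lam : Θ → ℝ} (hb : ∀ θ, 0 < b θ)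
    (hlam : Monotone lam) {f : Θ → ℝ} (hf : f ∈ extremeMixtures θmin θmax b lam) :
    SingleCrossing f := by
  rw [← SingleCrossing.mul_iff_of_pos hb, funext hf]
  exact .of_monotone_or_antitone (monotone_or_antitone_mix hlam _ _)

/-- The members of `V`, rescaled by a common positive factor, are mixtures of their extreme values
with a common increasing weight: the representation in the theorem without its additive term, which
cancels in differences of utilities. -/
def HasMonotoneExtremeMixture (θmin θmax : Θ) (V : Submodule ℝ (Θ → ℝ)) : Prop :=
  ∃ b lam : Θ → ℝ, (∀ θ, 0 < b θ) ∧ (∀ θ, lam θ ∈ Set.Icc (0 : ℝ) 1) ∧ Monotone lam ∧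
    V ≤ extremeMixtures θmin θmax b lam

lemma SingleCrossing.hasMonotoneExtremeMixture_span_singleton (hmin : IsBot θmin)
    (hmax : IsTop θmax) {f : Θ → ℝ} (hf : SingleCrossing f) :
    HasMonotoneExtremeMixture θmin θmax (Submodule.span ℝ {f}) := by
  choose b hb hbf using fun θ => exists_pos_mul_eq_real_sign (f θ)
  obtain ⟨lam, hlam, hmono, hmix⟩ := exists_monotone_weight hmin hmax hf
  refine ⟨b, lam, hb, hlam, hmono, (Submodule.span_singleton_le_iff_mem _ _).2 fun θ => ?_⟩
  simp only [hbf, hmix θ]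

lemma eq_of_eq_extremes (hmin : IsBot θmin) (hmax : IsTop θmax)
    (hV : ∀ f ∈ V, SingleCrossing f) {f g : Θ → ℝ} (hf : f ∈ V) (hg : g ∈ V)
    (heq_min : f θmin = g θmin) (heq_max : f θmax = g θmax) : f = g := by
  funext θ
  exact sub_eq_zero.1 ((hV _ (V.sub_mem hf hg)).eq_zero_of_eq_zero_of_eq_zero (hmin θ) (hmax θ)
    (sub_eq_zero.2 heq_min) (sub_eq_zero.2 heq_max))

lemma monotone_div_of_forall_singleCrossing (hmin : IsBot θmin) (hmax : IsTop θmax)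
    (hV : ∀ f ∈ V, SingleCrossing f) {t e : Θ → ℝ} (ht : t ∈ V) (he : e ∈ V)
    (htpos : ∀ θ, 0 < t θ) (hlt : e θmin / t θmin < e θmax / t θmax) :
    Monotone (fun θ => e θ / t θ) := by
  refine monotone_of_forall_singleCrossing_sub hmin hmax hlt fun m => ?_
  have hdiv : (fun θ => e θ / t θ - m) = fun θ => (t θ)⁻¹ * (e - m • t) θ := by
    funext θ
    have := (htpos θ).ne'
    simp only [Pi.sub_apply, Pi.smul_apply, smul_eq_mul]
    field_simp
  rw [hdiv, SingleCrossing.mul_iff_of_pos fun θ => inv_pos.2 (htpos θ)]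
  exact hV _ (V.sub_mem he (V.smul_mem m ht))

lemma hasMonotoneExtremeMixture_of_extreme_basis (hmin : IsBot θmin) (hmax : IsTop θmax)
    (hV : ∀ f ∈ V, SingleCrossing f) {t e : Θ → ℝ} (ht : t ∈ V) (he : e ∈ V)
    (ht_min : t θmin = 1) (ht_max : t θmax = 1) (he_min : e θmin = 0) (he_max : e θmax = 1) :
    HasMonotoneExtremeMixture θmin θmax V := by
  have htpos (θ : Θ) : 0 < t θ :=
    (hV t ht).pos_of_pos_of_pos (hmin θ) (hmax θ) (by simp [ht_min]) (by simp [ht_max])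
  have hmono : Monotone (fun θ => e θ / t θ) :=
    monotone_div_of_forall_singleCrossing hmin hmax hV ht he htpos
      (by simp [ht_min, ht_max, he_min, he_max])
  refine ⟨fun θ => (t θ)⁻¹, fun θ => e θ / t θ, fun θ => inv_pos.2 (htpos θ), fun θ => ⟨?_, ?_⟩,
    hmono, fun g hg θ => ?_⟩
  · simpa [he_min] using hmono (hmin θ)
  · simpa [he_max, ht_max] using hmono (hmax θ)
  · have hg_eq : g = g θmin • t + (g θmax - g θmin) • e :=
      eq_of_eq_extremes hmin hmax hV hg
        (V.add_mem (V.smul_mem _ ht) (V.smul_mem _ he))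
        (by simp [ht_min, he_min]) (by simp [ht_max, he_max])
    have hgθ : g θ = g θmin * t θ + (g θmax - g θmin) * e θ := congrFun hg_eq θ
    have := (htpos θ).ne'
    simp only [ht_min, ht_max, hgθ]
    field_simp
    ring

lemma extremeValues_injective (hmin : IsBot θmin) (hmax : IsTop θmax)
    (hV : ∀ f ∈ V, SingleCrossing f) : Function.Injective (extremeValues θmin θmax V) :=
  fun f g hfg => Subtype.ext <| eq_of_eq_extremes hmin hmax hV f.2 g.2
    (congrArg Prod.fst hfg) (congrArg Prod.snd hfg)

theorem hasMonotoneExtremeMixture_of_forall_singleCrossing (hmin : IsBot θmin)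
    (hmax : IsTop θmax) (hV : ∀ f ∈ V, SingleCrossing f) :
    HasMonotoneExtremeMixture θmin θmax V := by
  have hinj := extremeValues_injective hmin hmax hV
  rcases surjective_or_finrank_lt_of_injective hinj with hsurj | hlt
  · obtain ⟨⟨t, ht⟩, ht_val⟩ := hsurj (1, 1)
    obtain ⟨⟨e, he⟩, he_val⟩ := hsurj (0, 1)
    exact hasMonotoneExtremeMixture_of_extreme_basis hmin hmax hV ht he
      (congrArg Prod.fst ht_val) (congrArg Prod.snd ht_val)
      (congrArg Prod.fst he_val) (congrArg Prod.snd he_val)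
  · have : FiniteDimensional ℝ V := .of_injective _ hinj
    rw [Module.finrank_prod, Module.finrank_self, Nat.lt_succ_iff,
      Submodule.finrank_le_one_iff_isPrincipal] at hlt
    obtain ⟨f, rfl⟩ := hlt
    exact (hV f (Submodule.mem_span_singleton_self f)).hasMonotoneExtremeMixture_span_singleton
      hmin hmax

theorem forall_singleCrossing_iff_hasMonotoneExtremeMixture (hmin : IsBot θmin)
    (hmax : IsTop θmax) :
    (∀ f ∈ V, SingleCrossing f) ↔ HasMonotoneExtremeMixture θmin θmax V :=
  ⟨hasMonotoneExtremeMixture_of_forall_singleCrossing hmin hmax,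
    fun ⟨_, _, hb, _, hlam, hle⟩ _ hf => singleCrossing_of_mem_extremeMixtures hb hlam (hle hf)⟩

end ExtremeMixtures

section ConvexEnv

variable {Θ A : Type*} {u : A → Θ → ℝ}

lemma ConvexEnv.convex_range (hu : ConvexEnv u) : Convex ℝ (Set.range u) := by
  rw [convex_iff_forall_pos]
  rintro _ ⟨a, rfl⟩ _ ⟨a', rfl⟩ p q hp hq hpq
  obtain ⟨a'', ha''⟩ := hu a a' p hp (by linarith)
  obtain rfl : q = 1 - p := by linarith
  exact ⟨a'', funext ha''⟩

theorem ConvexEnv.scd_iff_forall_mem_vectorSpan [PartialOrder Θ] (hu : ConvexEnv u) :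
    SCD u ↔ ∀ f ∈ vectorSpan ℝ (Set.range u), SingleCrossing f := by
  refine ⟨fun hscd f hf => ?_, fun h a a' =>
    h _ (vsub_mem_vectorSpan ℝ (Set.mem_range_self a) (Set.mem_range_self a'))⟩
  rcases isEmpty_or_nonempty A with _ | _
  · obtain rfl : f = 0 := by simpa [Set.range_eq_empty] using hf
    exact .of_monotone_or_antitone (.inl monotone_const)
  · obtain ⟨r, hr, _, ⟨a, rfl⟩, _, ⟨a', rfl⟩, rfl⟩ :=
      exists_nonneg_smul_sub_of_mem_vectorSpan hu.convex_range (Set.range_nonempty u) hf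
    exact (hscd a a').smul_of_nonneg hr

end ConvexEnv

/-- When `Θ` has a minimum and a maximum, in a convex environment,
`u` has SCD iff it has a positive affine transformation that is a convex
combination of the extreme types' utilities with increasing weight. -/
theorem scd_iff_convex_comb_of_extremes {Θ A : Type*} [PartialOrder Θ]
    (hub : ∀ θ₁ θ₂ : Θ, ∃ θ : Θ, θ₁ ≤ θ ∧ θ₂ ≤ θ)
    (hlb : ∀ θ₁ θ₂ : Θ, ∃ θ : Θ, θ ≤ θ₁ ∧ θ ≤ θ₂)
    (θmin θmax : Θ) (hmin : ∀ θ : Θ, θmin ≤ θ) (hmax : ∀ θ : Θ, θ ≤ θmax)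
    (u : A → Θ → ℝ) (hconv : ConvexEnv u) :
    SCD u ↔
      ∃ (b c lam : Θ → ℝ),
        (∀ θ, 0 < b θ) ∧ (∀ θ, lam θ ∈ Set.Icc (0 : ℝ) 1) ∧ Monotone lam ∧
        (∀ (a : A) (θ : Θ),
          b θ * u a θ + c θ =
            lam θ * (b θmax * u a θmax + c θmax) +
              (1 - lam θ) * (b θmin * u a θmin + c θmin)) := by
  rw [hconv.scd_iff_forall_mem_vectorSpan,
    forall_singleCrossing_iff_hasMonotoneExtremeMixture hmin hmax]
  simp only [HasMonotoneExtremeMixture, vectorSpan_range_le_extremeMixtures_iff]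
  exact ⟨fun ⟨b, lam, hb, hlam, hmono, c, hc⟩ => ⟨b, c, lam, hb, hlam, hmono, hc⟩,
    fun ⟨b, c, lam, hb, hlam, hmono, hc⟩ => ⟨b, lam, hb, hlam, hmono, c, hc⟩⟩
end
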